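/- arXiv:1209.4256 — 2 statements merged into one kernel-verified Lean document; each statement's English description precedes it below -/
import Mathlib

section
/- Let R = Q/𝔟₂ where 𝔟₂ = (x³, x²y, yz², z³, xyz) ⊆ Q. Then the socle (0 :_R 𝔪) of R is equal to the R-submodule generated by the image of x²z², and its dimension as a k-vector space is 1 (that is, R has type 1). -/
/-!
STATEMENT 5: For `R = Q/b2`, the socle `(0 :_R m)` of `R` (where `m` is the
maximal ideal of `R`, the image of `(x,y,z)`) equals the `R`-submodule generated by
the images of x^2*z^2, and its dimension as a `k`-vector space is 1 (so `R` has type 1).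

Here `Q = k[[x,y,z]]` is formalized as `MvPowerSeries (Fin 3) k` with
`x = X 0`, `y = X 1`, `z = X 2`.
-/

noncomputable section

/-- The variable `x` in `Q = k[[x,y,z]]`. -/
def xx (k : Type*) [Field k] : MvPowerSeries (Fin 3) k := MvPowerSeries.X 0
/-- The variable `y` in `Q = k[[x,y,z]]`. -/
def yy (k : Type*) [Field k] : MvPowerSeries (Fin 3) k := MvPowerSeries.X 1
/-- The variable `z` in `Q = k[[x,y,z]]`. -/
def zz (k : Type*) [Field k] : MvPowerSeries (Fin 3) k := MvPowerSeries.X 2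

/-- The ideal `b2` of the paper. -/
def Ib2 (k : Type*) [Field k] : Ideal (MvPowerSeries (Fin 3) k) :=
  Ideal.span {xx k ^ 3, xx k ^ 2 * yy k, yy k * zz k ^ 2, zz k ^ 3, xx k * yy k * zz k}

/-!
The ideal `b2` is generated by monomials, so a power series lies in it exactly when its
coefficients vanish at all standard exponents, i.e. those divisible by no generator
(`mem_Ib2_iff`, an instance of `mem_span_monomial_iff`). Every standard exponent other than that
of `x^2 z^2` stays standard after multiplication by one of the variables (`IsStd.exists_add_single`),
so a power series killed by `x`, `y`, `z` modulo `b2` agrees with `c x^2 z^2` modulo `b2`, where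
`c ∈ k` is its coefficient there. Conversely `x^2 z^2` is a standard monomial, and its product
with each variable lies in `b2`. Hence the socle is the line `k · x^2 z^2`.
-/

/-- A power series lies in an ideal generated by finitely many monomials iff its coefficients vanish
at all exponents divisible by no generator. -/
theorem mem_span_monomial_iff {σ k : Type*} [CommRing k] (M : Finset (σ →₀ ℕ))
    (f : MvPowerSeries σ k) :
    f ∈ Ideal.span ((fun m => MvPowerSeries.monomial m (1 : k)) '' (M : Set (σ →₀ ℕ))) ↔
      ∀ e, (∀ m ∈ M, ¬ m ≤ e) → MvPowerSeries.coeff e f = 0 := by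
  classical
  constructor
  · intro hf e he
    rw [Ideal.span, Submodule.mem_span_set'] at hf
    obtain ⟨n, c, v, rfl⟩ := hf
    rw [map_sum]
    refine Finset.sum_eq_zero fun i _ => ?_
    obtain ⟨m, hm, hv⟩ := (v i).2
    rw [← hv, smul_eq_mul, MvPowerSeries.coeff_mul_monomial, if_neg (he m hm)]
  · induction M using Finset.induction_on generalizing f with
    | empty =>
      intro h
      have : f = 0 := MvPowerSeries.ext fun e => by simpa using h e (by simp)
      simp [this]
    | insert m M _ ih =>
      intro h
      -- split off the part of `f` divisible by the monomial of exponent `m`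
      let q : MvPowerSeries σ k := fun e => MvPowerSeries.coeff (e + m) f
      have hq : ∀ e, MvPowerSeries.coeff e q = MvPowerSeries.coeff (e + m) f := fun _ => rfl
      rw [Finset.coe_insert, Set.image_insert_eq, Ideal.mem_span_insert]
      refine ⟨q, f - q * MvPowerSeries.monomial m 1, ih _ fun e he => ?_, by ring⟩
      rw [map_sub, MvPowerSeries.coeff_mul_monomial]
      split_ifs with hme
      · rw [hq, tsub_add_cancel_of_le hme]
        simp
      · rw [h e]
        · simp
        · simpa [hme] using he

/-- The exponent `e` is divisible by no generator of `b2`, i.e. the monomial with exponent `e` is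
nonzero modulo `b2`. -/
def IsStd (e : Fin 3 →₀ ℕ) : Prop :=
  e 0 < 3 ∧ ¬ (2 ≤ e 0 ∧ 1 ≤ e 1) ∧ ¬ (1 ≤ e 1 ∧ 2 ≤ e 2) ∧ e 2 < 3 ∧
    ¬ (1 ≤ e 0 ∧ 1 ≤ e 1 ∧ 1 ≤ e 2)

/-- The exponent of the monomial `x^2 z^2`. -/
def socExp : Fin 3 →₀ ℕ := Finsupp.single 0 2 + Finsupp.single 2 2

theorem mem_Ib2_iff {k : Type*} [Field k] (f : MvPowerSeries (Fin 3) k) :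
    f ∈ Ib2 k ↔ ∀ e, IsStd e → MvPowerSeries.coeff e f = 0 := by
  classical
  have h := mem_span_monomial_iff (k := k)
    ({Finsupp.single 0 3, Finsupp.single 0 2 + Finsupp.single 1 1,
      Finsupp.single 1 1 + Finsupp.single 2 2, Finsupp.single 2 3,
      Finsupp.single 0 1 + Finsupp.single 1 1 + Finsupp.single 2 1} : Finset (Fin 3 →₀ ℕ)) f
  have hI : Ib2 k = Ideal.span ((fun m => MvPowerSeries.monomial m (1 : k)) ''
      (({Finsupp.single 0 3, Finsupp.single 0 2 + Finsupp.single 1 1,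
      Finsupp.single 1 1 + Finsupp.single 2 2, Finsupp.single 2 3,
      Finsupp.single 0 1 + Finsupp.single 1 1 + Finsupp.single 2 1} : Finset (Fin 3 →₀ ℕ)) :
        Set (Fin 3 →₀ ℕ))) := by
    simp only [Ib2, xx, yy, zz, MvPowerSeries.X_pow_eq]
    simp only [MvPowerSeries.X, MvPowerSeries.monomial_mul_monomial, mul_one, Finset.coe_insert, Finset.coe_singleton,
      Set.image_insert_eq, Set.image_singleton]
  rw [hI, h]
  refine forall_congr' fun e => ?_
  refine imp_congr_left ?_
  simp [IsStd, Finsupp.le_def, Fin.forall_fin_succ]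

theorem xz_eq (k : Type*) [Field k] :
    xx k ^ 2 * zz k ^ 2 = MvPowerSeries.monomial socExp (1 : k) := by
  simp [xx, zz, MvPowerSeries.X_pow_eq, MvPowerSeries.monomial_mul_monomial, socExp]

theorem isStd_socExp : IsStd socExp := by
  simp [IsStd, socExp]

theorem IsStd.exists_add_single {e : Fin 3 →₀ ℕ} (he : IsStd e) (hne : e ≠ socExp) :
    ∃ i, IsStd (e + Finsupp.single i 1) := by
  have hne' : ¬ (e 0 = 2 ∧ e 1 = 0 ∧ e 2 = 2) := by
    rintro ⟨h0, h1, h2⟩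
    apply hne
    ext i
    fin_cases i <;> simp [socExp, h0, h1, h2]
  by_contra! h
  have h0 := h 0
  have h1 := h 1
  have h2 := h 2
  simp [IsStd] at he h0 h1 h2
  omega

/-- A power series killed by every variable modulo `b2` is a scalar multiple of `x^2 z^2`
modulo `b2`. -/
theorem sub_mem_of_X_mul_mem {k : Type*} [Field k] {f : MvPowerSeries (Fin 3) k}
    (hf : ∀ i, MvPowerSeries.X i * f ∈ Ib2 k) :
    f - MvPowerSeries.coeff socExp f • (xx k ^ 2 * zz k ^ 2) ∈ Ib2 k := by
  classical
  rw [mem_Ib2_iff]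
  intro e he
  rw [xz_eq, map_sub, MvPowerSeries.coeff_smul, MvPowerSeries.coeff_monomial]
  by_cases hne : e = socExp
  · simp [hne]
  · obtain ⟨i, hi⟩ := he.exists_add_single hne
    have := (mem_Ib2_iff _).1 (hf i) _ hi
    rw [mul_comm, MvPowerSeries.X, MvPowerSeries.coeff_add_mul_monomial] at this
    simpa [hne] using this

theorem X_mul_xz_mem (k : Type*) [Field k] (i : Fin 3) :
    MvPowerSeries.X i * (xx k ^ 2 * zz k ^ 2) ∈ Ib2 k := by
  have h0 : xx k ^ 3 ∈ Ib2 k := Ideal.subset_span (by simp)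
  have h1 : xx k ^ 2 * yy k ∈ Ib2 k := Ideal.subset_span (by simp)
  have h2 : zz k ^ 3 ∈ Ib2 k := Ideal.subset_span (by simp)
  fin_cases i
  · change xx k * _ ∈ _
    convert Ideal.mul_mem_left _ (zz k ^ 2) h0 using 1
    ring
  · change yy k * _ ∈ _
    convert Ideal.mul_mem_left _ (zz k ^ 2) h1 using 1
    ring
  · change zz k * _ ∈ _
    convert Ideal.mul_mem_left _ (xx k ^ 2) h2 using 1
    ring

theorem mk_mem_socle_iff {k : Type*} [Field k] (f : MvPowerSeries (Fin 3) k) :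
    Ideal.Quotient.mk (Ib2 k) f ∈ (⊥ : Ideal (MvPowerSeries (Fin 3) k ⧸ Ib2 k)).colon
        (Ideal.map (Ideal.Quotient.mk (Ib2 k)) (Ideal.span {xx k, yy k, zz k})) ↔
      ∀ i, MvPowerSeries.X i * f ∈ Ib2 k := by
  rw [Ideal.map_span]
  erw [Submodule.colon_span]
  simp [Submodule.mem_colon, Set.image_insert_eq, Fin.forall_fin_succ, ← map_mul,
    Ideal.Quotient.eq_zero_iff_mem, xx, yy, zz, mul_comm f]

/-- The socle is the `k`-line spanned by the class of `x^2 z^2`. -/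
theorem mem_socle_iff {k : Type*} [Field k] (r : MvPowerSeries (Fin 3) k ⧸ Ib2 k) :
    r ∈ (⊥ : Ideal (MvPowerSeries (Fin 3) k ⧸ Ib2 k)).colon
        (Ideal.map (Ideal.Quotient.mk (Ib2 k)) (Ideal.span {xx k, yy k, zz k})) ↔
      ∃ c : k, c • Ideal.Quotient.mk (Ib2 k) (xx k ^ 2 * zz k ^ 2) = r := by
  obtain ⟨f, rfl⟩ := Ideal.Quotient.mk_surjective r
  constructor
  · intro h
    refine ⟨MvPowerSeries.coeff socExp f, ?_⟩
    exact (Ideal.Quotient.eq.2 (sub_mem_of_X_mul_mem ((mk_mem_socle_iff f).1 h))).symm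
  · rintro ⟨c, hc⟩
    rw [← hc]
    change Ideal.Quotient.mk (Ib2 k) (c • (xx k ^ 2 * zz k ^ 2)) ∈ _
    rw [mk_mem_socle_iff]
    intro i
    rw [mul_smul_comm, MvPowerSeries.smul_eq_C_mul]
    exact Ideal.mul_mem_left _ _ (X_mul_xz_mem k i)

theorem mk_xz_ne_zero (k : Type*) [Field k] :
    Ideal.Quotient.mk (Ib2 k) (xx k ^ 2 * zz k ^ 2) ≠ 0 := by
  classical
  rw [Ne, Ideal.Quotient.eq_zero_iff_mem, mem_Ib2_iff, xz_eq]
  intro h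
  simpa using h _ isStd_socExp

/-- The socle `(0 :_R m)` of `R = Q/b2`. -/
theorem socle_b2 (k : Type*) [Field k] :
    (⊥ : Ideal (MvPowerSeries (Fin 3) k ⧸ Ib2 k)).colon
        (Ideal.map (Ideal.Quotient.mk (Ib2 k)) (Ideal.span {xx k, yy k, zz k}))
      = Ideal.span {Ideal.Quotient.mk (Ib2 k) (xx k ^ 2 * zz k ^ 2)} ∧
    Module.finrank k (Submodule.restrictScalars k
      ((⊥ : Ideal (MvPowerSeries (Fin 3) k ⧸ Ib2 k)).colon
        (Ideal.map (Ideal.Quotient.mk (Ib2 k)) (Ideal.span {xx k, yy k, zz k})))) = 1 := by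
  constructor
  · apply le_antisymm
    · intro r hr
      obtain ⟨c, rfl⟩ := (mem_socle_iff r).1 hr
      exact Submodule.smul_of_tower_mem _ c (Ideal.subset_span rfl)
    · rw [Ideal.span_singleton_le_iff_mem, mem_socle_iff]
      exact ⟨1, one_smul _ _⟩
  · rw [← finrank_span_singleton (K := k) (mk_xz_ne_zero k)]
    have hspan : Submodule.restrictScalars k
        ((⊥ : Ideal (MvPowerSeries (Fin 3) k ⧸ Ib2 k)).colon
          (Ideal.map (Ideal.Quotient.mk (Ib2 k)) (Ideal.span {xx k, yy k, zz k})))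
        = Submodule.span k {Ideal.Quotient.mk (Ib2 k) (xx k ^ 2 * zz k ^ 2)} := by
      ext r
      rw [Submodule.restrictScalars_mem, mem_socle_iff, Submodule.mem_span_singleton]
    rw [hspan]
end
end

section
/- The ideal 𝔤₁ = (xy², xyz, yz², x⁴ − y³z, xz³ − y⁴) of Q is minimally generated by 5 elements; equivalently, the k-vector space 𝔤₁/(𝔪_Q·𝔤₁) has dimension 5. -/
/-!
Let `f₁, …, f₅` be the listed generators of `g1`, and let `d₁, …, d₅` be the exponents of the
monomials `xy²`, `xyz`, `yz²`, `x⁴`, `xz³`. The generators span `g1 / (m_Q * g1)` over `k`, since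
every power series is congruent to its constant coefficient modulo `m_Q`
(`mem_span_vars`, `map_mkQ_eq_span`).

They are linearly independent because the coefficient functionals at the `dᵢ` form a dual family:
the coefficient of `fⱼ` at `dᵢ` is `δᵢⱼ` (`coeff_gens`), and these functionals kill `m_Q * g1`. For
the latter, no monomial occurring in a product of a variable with some `fⱼ` divides the monomial of
exponent `dᵢ`, and the series with no monomial dividing a given one form an ideal (`lowIdeal`).
-/

/-!
STATEMENT 8: The ideal `g1` of `Q = k[[x,y,z]]` is minimally generated by 5
elements; equivalently (by Nakayama), the `k`-vector space `g1/(m_Q * g1)` has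
dimension 5, where `m_Q = (x,y,z)`. The quotient `g1/(m_Q*g1)` is realized as the
image of `g1` in `Q/(m_Q*g1)` (as `k`-vector spaces).

Here `Q = k[[x,y,z]]` is formalized as `MvPowerSeries (Fin 3) k` with
`x = X 0`, `y = X 1`, `z = X 2`.
-/

noncomputable section

/-- The ideal `g1` of the paper. -/
def Ig1 (k : Type*) [Field k] : Ideal (MvPowerSeries (Fin 3) k) :=
  Ideal.span {xx k * yy k ^ 2, xx k * yy k * zz k, yy k * zz k ^ 2, xx k ^ 4 - yy k ^ 3 * zz k, xx k * zz k ^ 3 - yy k ^ 4}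

/-- The exponent vector `(a, b, c)` of the monomial `x ^ a * y ^ b * z ^ c`. -/
def ex (a b c : ℕ) : Fin 3 →₀ ℕ := Finsupp.equivFunOnFinite.symm ![a, b, c]

lemma ex_le_iff {a b c a' b' c' : ℕ} : ex a b c ≤ ex a' b' c' ↔ a ≤ a' ∧ b ≤ b' ∧ c ≤ c' := by
  simp [Finsupp.le_def, ex, Fin.forall_fin_succ]

lemma ex_inj {a b c a' b' c' : ℕ} : ex a b c = ex a' b' c' ↔ a = a' ∧ b = b' ∧ c = c' := by
  simp only [le_antisymm_iff, ex_le_iff]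
  tauto

lemma mon_eq (k : Type*) [Field k] (a b c : ℕ) :
    xx k ^ a * yy k ^ b * zz k ^ c = MvPowerSeries.monomial (ex a b c) 1 := by
  have h : ex a b c = Finsupp.single 0 a + Finsupp.single 1 b + Finsupp.single 2 c := by
    ext i
    fin_cases i <;> simp [ex]
  simp [xx, yy, zz, MvPowerSeries.X_pow_eq, MvPowerSeries.monomial_mul_monomial, h]

/-- The listed generators of `g1`. -/
def gens (k : Type*) [Field k] : Fin 5 → MvPowerSeries (Fin 3) k :=
  ![xx k * yy k ^ 2, xx k * yy k * zz k, yy k * zz k ^ 2, xx k ^ 4 - yy k ^ 3 * zz k,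
    xx k * zz k ^ 3 - yy k ^ 4]

lemma Ig1_eq (k : Type*) [Field k] : Ig1 k = Ideal.span (Set.range (gens k)) := by
  simp only [Ig1, gens, Matrix.range_cons, Matrix.range_empty, Set.union_empty,
    Set.singleton_union]

lemma gens_eq (k : Type*) [Field k] : gens k =
    ![MvPowerSeries.monomial (ex 1 2 0) 1, MvPowerSeries.monomial (ex 1 1 1) 1,
      MvPowerSeries.monomial (ex 0 1 2) 1,
      MvPowerSeries.monomial (ex 4 0 0) 1 - MvPowerSeries.monomial (ex 0 3 1) 1,
      MvPowerSeries.monomial (ex 1 0 3) 1 - MvPowerSeries.monomial (ex 0 4 0) 1] := by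
  simp [gens, ← mon_eq]

/-- For each generator of `g1`, the exponent of a monomial occurring in it with coefficient `1`:
`xy²`, `xyz`, `yz²`, `x⁴`, `xz³`. -/
def expo : Fin 5 → Fin 3 →₀ ℕ := ![ex 1 2 0, ex 1 1 1, ex 0 1 2, ex 4 0 0, ex 1 0 3]

lemma coeff_gens (k : Type*) [Field k] (i j : Fin 5) :
    MvPowerSeries.coeff (expo i) (gens k j) = if i = j then 1 else 0 := by
  rw [gens_eq]
  fin_cases i <;> fin_cases j <;> simp [expo, MvPowerSeries.coeff_monomial, ex_inj]

/-- The ideal of power series all of whose coefficients at exponents `e ≤ d` vanish, i.e. in which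
no divisor of the monomial of exponent `d` occurs. -/
def lowIdeal (k : Type*) [Field k] (d : Fin 3 →₀ ℕ) : Ideal (MvPowerSeries (Fin 3) k) where
  carrier := {f | ∀ e ≤ d, MvPowerSeries.coeff e f = 0}
  zero_mem' := by simp
  add_mem' hf hg e he := by simp [hf e he, hg e he]
  smul_mem' a f hf e he := by
    rw [smul_eq_mul, MvPowerSeries.coeff_mul]
    refine Finset.sum_eq_zero fun p hp => ?_
    rw [hf p.2 ((Finset.HasAntidiagonal.antidiagonal.snd_le hp).trans he), mul_zero]

lemma monomial_mem_lowIdeal (k : Type*) [Field k] {d e : Fin 3 →₀ ℕ} (h : ¬ e ≤ d) :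
    MvPowerSeries.monomial e (1 : k) ∈ lowIdeal k d := by
  intro e' he'
  exact MvPowerSeries.coeff_monomial_ne (fun H => h (by rwa [H] at he')) 1

lemma mul_gens_mem_lowIdeal (k : Type*) [Field k] (i j : Fin 5)
    {g : MvPowerSeries (Fin 3) k} (hg : g ∈ ({xx k, yy k, zz k} : Set _)) :
    g * gens k j ∈ lowIdeal k (expo i) := by
  have key : ∀ a b c : ℕ, ¬ ex a b c ≤ expo i →
      xx k ^ a * yy k ^ b * zz k ^ c ∈ lowIdeal k (expo i) := fun a b c h => by
    rw [mon_eq]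
    exact monomial_mem_lowIdeal k h
  -- Only `x⁴` and `xz³` matter among the `expo i`, as the others have degree `3`.
  have hx : ∀ a b c : ℕ, 4 ≤ a + b + c → ¬ ex a b c ≤ ex 4 0 0 → ¬ ex a b c ≤ ex 1 0 3 →
      ¬ ex a b c ≤ expo i := by
    intro a b c h h1 h2
    fin_cases i <;> simp [expo, ex_le_iff] at h1 h2 ⊢ <;> omega
  replace key : ∀ a b c : ℕ, 4 ≤ a + b + c → ¬ ex a b c ≤ ex 4 0 0 → ¬ ex a b c ≤ ex 1 0 3 →
      xx k ^ a * yy k ^ b * zz k ^ c ∈ lowIdeal k (expo i) := fun a b c h h1 h2 =>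
    key a b c (hx a b c h h1 h2)
  simp only [ex_le_iff] at key
  -- A variable is a monomial of degree `1`, so its three cases are treated together.
  have m1 : ∀ a b c, g = xx k ^ a * yy k ^ b * zz k ^ c → a + b + c = 1 →
      g * gens k j ∈ lowIdeal k (expo i) := by
    rintro a b c rfl h
    fin_cases j
    · convert key (a + 1) (b + 2) c (by omega) (by omega) (by omega) using 1
      simp [gens]; ring
    · convert key (a + 1) (b + 1) (c + 1) (by omega) (by omega) (by omega) using 1
      simp [gens]; ring
    · convert key a (b + 1) (c + 2) (by omega) (by omega) (by omega) using 1
      simp [gens]; ring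
    · convert sub_mem (key (a + 4) b c (by omega) (by omega) (by omega))
        (key a (b + 3) (c + 1) (by omega) (by omega) (by omega)) using 1
      simp [gens]; ring
    · convert sub_mem (key (a + 1) b (c + 3) (by omega) (by omega) (by omega))
        (key a (b + 4) c (by omega) (by omega) (by omega)) using 1
      simp [gens]; ring
  rcases hg with rfl | rfl | rfl
  · exact m1 1 0 0 (by simp) rfl
  · exact m1 0 1 0 (by simp) rfl
  · exact m1 0 0 1 (by simp) rfl

/-- The coefficient functionals at the exponents `expo i` vanish on `m_Q * g1`. -/
lemma coeff_expo_eq_zero (k : Type*) [Field k] (i : Fin 5) {p : MvPowerSeries (Fin 3) k}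
    (hp : p ∈ Ideal.span {xx k, yy k, zz k} * Ig1 k) : MvPowerSeries.coeff (expo i) p = 0 := by
  have hle : Ideal.span {xx k, yy k, zz k} * Ig1 k ≤ lowIdeal k (expo i) := by
    rw [Ig1_eq, Ideal.span_mul_span', Ideal.span_le]
    rintro _ ⟨g, hg, _, ⟨j, rfl⟩, rfl⟩
    exact mul_gens_mem_lowIdeal k i j hg
  exact hle hp _ le_rfl

/-- A power series without constant term lies in `(x, y, z)`: its monomials split into those
divisible by `x`, those divisible by `y` but not by `x`, and the remaining ones, which are
divisible by `z`. -/
lemma mem_span_vars (k : Type*) [Field k] {f : MvPowerSeries (Fin 3) k}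
    (hf : MvPowerSeries.coeff 0 f = 0) : f ∈ Ideal.span {xx k, yy k, zz k} := by
  let part (P : (Fin 3 →₀ ℕ) → Prop) [DecidablePred P] : MvPowerSeries (Fin 3) k :=
    fun n => if P n then MvPowerSeries.coeff n f else 0
  have hpart (P : (Fin 3 →₀ ℕ) → Prop) [DecidablePred P] (n) :
      MvPowerSeries.coeff n (part P) = if P n then MvPowerSeries.coeff n f else 0 := rfl
  have hsum : f = part (fun n => n 0 ≠ 0) + part (fun n => n 0 = 0 ∧ n 1 ≠ 0) +
      part (fun n => n 0 = 0 ∧ n 1 = 0) := by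
    ext n
    simp only [map_add, hpart]
    by_cases h0 : n 0 = 0 <;> by_cases h1 : n 1 = 0 <;> simp [h0, h1]
  have hX : ∀ (s : Fin 3) (p : MvPowerSeries (Fin 3) k),
      (MvPowerSeries.X s : MvPowerSeries (Fin 3) k) ∈ ({xx k, yy k, zz k} : Set _) →
      (∀ m : Fin 3 →₀ ℕ, m s = 0 → MvPowerSeries.coeff m p = 0) →
      p ∈ Ideal.span {xx k, yy k, zz k} := fun s p hs hp =>
    Ideal.mem_of_dvd _ (MvPowerSeries.X_dvd_iff.2 hp) (Ideal.subset_span hs)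
  rw [hsum]
  refine add_mem (add_mem (hX 0 _ (Or.inl rfl) ?_) (hX 1 _ (Or.inr (Or.inl rfl)) ?_))
    (hX 2 _ (Or.inr (Or.inr rfl)) ?_)
  · intro m hm
    simp [hpart, hm]
  · intro m hm
    simp [hpart, hm]
  · intro m hm
    rw [hpart]
    split_ifs with h
    · have : m = 0 := by
        ext i
        fin_cases i
        exacts [h.1, h.2, hm]
      rw [this, hf]
    · rfl

lemma map_mkQ_eq_span (k : Type*) [Field k] :
    Submodule.map
        (Submodule.restrictScalars k (Ideal.span {xx k, yy k, zz k} * Ig1 k)).mkQ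
        (Submodule.restrictScalars k (Ig1 k)) =
      Submodule.span k (Set.range fun i =>
        (Submodule.restrictScalars k (Ideal.span {xx k, yy k, zz k} * Ig1 k)).mkQ (gens k i)) := by
  have hmem : ∀ i, gens k i ∈ Ig1 k := fun i => by
    rw [Ig1_eq]
    exact Ideal.subset_span ⟨i, rfl⟩
  apply le_antisymm
  · rintro _ ⟨p, hp, rfl⟩
    have hp' : p ∈ Ideal.span (Set.range (gens k)) := Ig1_eq k ▸ hp
    obtain ⟨a, rfl⟩ := Ideal.mem_span_range_iff_exists_fun.1 hp'
    rw [Submodule.mem_span_range_iff_exists_fun]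
    refine ⟨fun i => MvPowerSeries.coeff 0 (a i), ?_⟩
    simp only [← map_smul, ← map_sum]
    rw [Submodule.mkQ_apply, Submodule.mkQ_apply, eq_comm, Submodule.Quotient.eq,
      ← Finset.sum_sub_distrib, Submodule.restrictScalars_mem]
    refine sum_mem fun i _ => ?_
    rw [MvPowerSeries.smul_eq_C_mul, ← sub_mul]
    exact Ideal.mul_mem_mul (mem_span_vars k (by simp)) (hmem i)
  · rw [Submodule.span_le]
    rintro _ ⟨i, rfl⟩
    exact ⟨gens k i, hmem i, rfl⟩

lemma linearIndependent_mkQ_gens (k : Type*) [Field k] :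
    LinearIndependent k fun i =>
      (Submodule.restrictScalars k (Ideal.span {xx k, yy k, zz k} * Ig1 k)).mkQ (gens k i) := by
  rw [Fintype.linearIndependent_iff]
  intro c hc i
  simp only [← map_smul, ← map_sum] at hc
  rw [Submodule.mkQ_apply, Submodule.Quotient.mk_eq_zero, Submodule.restrictScalars_mem] at hc
  simpa [coeff_gens] using coeff_expo_eq_zero k i hc

theorem mu_g1 (k : Type*) [Field k] :
    Module.finrank k
      (Submodule.map
        (Submodule.restrictScalars k (Ideal.span {xx k, yy k, zz k} * Ig1 k)).mkQ
        (Submodule.restrictScalars k (Ig1 k))) = 5 := by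
  rw [map_mkQ_eq_span, finrank_span_eq_card (linearIndependent_mkQ_gens k), Fintype.card_fin]
end
end
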